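/- arXiv:1803.09245 — 3 statements merged into one kernel-verified Lean document; each statement's English description precedes it below -/
import Mathlib

section
/- Let p be a prime, R a ℤ_(p)-algebra, and P an fs monoid with P^gp torsion free. For all x₁, x₂ ∈ P[1/p], ξ₁ ∈ V^{u(x₁)}·W(R) and ξ₂ ∈ V^{u(x₂)}·W(R), there exists ξ ∈ V^{u(x₁+x₂)}·W(R) such that b(ξ₁, x₁)·b(ξ₂, x₂) = b(ξ, x₁ + x₂) in W(R[P]); that is, the product of two P-basic Witt differentials of degree 0 is again a P-basic Witt differential of degree 0. -/
open scoped Classical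

/-- `H` together with `ι : G →+ H` realizes the localization `G ⊗_ℤ ℤ[1/p]`
of the abelian group `G` away from the prime `p`. -/
structure IsPLocalization (p : ℕ) {G H : Type*} [AddCommGroup G] [AddCommGroup H]
    (ι : G →+ H) : Prop where
  smul_bij : Function.Bijective (fun h : H => p • h)
  exists_rep : ∀ h : H, ∃ (n : ℕ) (g : G), p ^ n • h = ι g
  ker_eq : ∀ g : G, ι g = 0 ↔ ∃ n : ℕ, p ^ n • g = 0

/-- `P[1/p]`, viewed inside `H = P^gp ⊗_ℤ ℤ[1/p]`. -/
def pDiv (p : ℕ) {G H : Type*} [AddCommGroup G] [AddCommGroup H] (ι : G →+ H)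
    (P : AddSubmonoid G) : Set H :=
  {h | ∃ n : ℕ, p ^ n • h ∈ ι '' (P : Set G)}

/-- `u(x)` : the least `n ∈ ℕ` such that `p^n • x` lies in the image of `P`. -/
noncomputable def uVal (p : ℕ) {G H : Type*} [AddCommGroup G] [AddCommGroup H]
    (ι : G →+ H) (P : AddSubmonoid G) (x : H) : ℕ :=
  sInf {n : ℕ | p ^ n • x ∈ ι '' (P : Set G)}

/-- The element `p^{u(x)} • x` of `P`, for `x ∈ P[1/p]` (junk value `0` otherwise). -/
noncomputable def pLift (p : ℕ) {G H : Type*} [AddCommGroup G] [AddCommGroup H]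
    (ι : G →+ H) (P : AddSubmonoid G) (x : H) : ↥P :=
  if h : p ^ uVal p ι P x • x ∈ ι '' (P : Set G) then
    ⟨((Set.mem_image _ _ _).1 h).choose, ((Set.mem_image _ _ _).1 h).choose_spec.1⟩
  else 0

/-- The `P`-basic Witt differential of degree `0`:
`b(V^{u(x)} η, x) = V^{u(x)} (η · X^{p^{u(x)} x}) ∈ W(R[P])`. -/
noncomputable def bwitt (p : ℕ) [Fact p.Prime] {G H : Type*}
    [AddCommGroup G] [AddCommGroup H] (ι : G →+ H) (P : AddSubmonoid G)
    {R : Type*} [CommRing R] (η : WittVector p R) (x : H) :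
    WittVector p (AddMonoidAlgebra R ↥P) :=
  (⇑(WittVector.verschiebung :
      WittVector p (AddMonoidAlgebra R ↥P) →+
        WittVector p (AddMonoidAlgebra R ↥P)))^[uVal p ι P x]
    (WittVector.map (algebraMap R (AddMonoidAlgebra R ↥P)) η *
      WittVector.teichmuller p (AddMonoidAlgebra.single (pLift p ι P x) (1 : R)))

/-!
For `u(x₂) ≤ u(x₁)`, write `m = u(x₂)` and `u(x₁) = m + c`. The projection formula
`V^n a · b = V^n (a · F^n b)`, together with `F^m V^m = p^m` and `F [t] = [t ^ p]`, gives
`V^(m+c) (η₁ [s]) · V^m (η₂ [t]) = V^(m+c) (η₁ · F^c η₂ · p^m · [s · t ^ p^c])`.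
For `s = T^(p^u(x₁) x₁)` and `t = T^(p^u(x₂) x₂)` the monomial `s · t ^ p^c` has exponent
`p^u(x₁) (x₁ + x₂)`. As `u(x₁ + x₂) ≤ u(x₁)`, this monomial is a `p^d`-th power with
`d = u(x₁) - u(x₁ + x₂)`, so its Teichmüller lift is in the image of `F^d`, and reading the
projection formula backwards moves `V^d` onto the coefficient.
-/

section TeichmullerVerschiebung

open WittVector Function

variable {p : ℕ} [Fact p.Prime] {R S : Type*} [CommRing R] [CommRing S]

theorem frobenius_teichmuller_of_invertible [Invertible (p : R)] (r : R) :
    frobenius (teichmuller p r) = teichmuller p (r ^ p) := by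
  apply (ghostMap.bijective_of_invertible p R).injective
  ext n
  rw [ghostMap_apply, ghostMap_apply, ghostComponent_frobenius, ghostComponent_teichmuller,
    ghostComponent_teichmuller, ← pow_mul, pow_succ']

theorem wittMap_frobenius (f : R →+* S) (x : WittVector p R) :
    WittVector.map f (frobenius x) = frobenius (WittVector.map f x) := by
  ext n
  simp only [map_coeff, coeff_frobenius, MvPolynomial.aeval_def, MvPolynomial.hom_eval₂]
  congr 1
  exact RingHom.ext_int _ _

theorem frobenius_teichmuller (r : R) :
    frobenius (teichmuller p r) = teichmuller p (r ^ p) := by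
  -- `R` is a quotient of the polynomial ring `MvPolynomial R ℤ`, which embeds into
  -- `MvPolynomial R ℚ`, where `p` is invertible.
  have integral_case (g : MvPolynomial R ℤ) :
      frobenius (teichmuller p g) = teichmuller p (g ^ p) := by
    apply map_injective (MvPolynomial.map (Int.castRingHom ℚ))
      (MvPolynomial.map_injective _ Int.cast_injective)
    rw [wittMap_frobenius, map_teichmuller, map_teichmuller, frobenius_teichmuller_of_invertible,
      map_pow (MvPolynomial.map _)]
  obtain ⟨g, rfl⟩ := MvPolynomial.counit_surjective R r
  rw [← map_teichmuller, ← wittMap_frobenius, integral_case, map_teichmuller, map_pow]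

theorem iterate_frobenius_teichmuller (r : R) (n : ℕ) :
    frobenius^[n] (teichmuller p r) = teichmuller p (r ^ p ^ n) := by
  induction n with
  | zero => simp
  | succ n ih => rw [iterate_succ_apply', ih, frobenius_teichmuller, ← pow_mul, pow_succ]

theorem wittMap_iterate_frobenius (f : R →+* S) (x : WittVector p R) (n : ℕ) :
    WittVector.map f (frobenius^[n] x) = frobenius^[n] (WittVector.map f x) :=
  Semiconj.iterate_right (wittMap_frobenius f) n x

theorem wittMap_iterate_verschiebung (f : R →+* S) (x : WittVector p R) (n : ℕ) :
    WittVector.map f (verschiebung^[n] x) = verschiebung^[n] (WittVector.map f x) :=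
  Semiconj.iterate_right (map_verschiebung f) n x

theorem iterate_frobenius_iterate_verschiebung (x : WittVector p R) (n : ℕ) :
    frobenius^[n] (verschiebung^[n] x) = x * (p : WittVector p R) ^ n := by
  induction n generalizing x with
  | zero => simp
  | succ n ih =>
    rw [iterate_succ_apply' verschiebung, iterate_succ_apply, frobenius_verschiebung,
      iterate_map_mul, ih, ← RingHom.coe_pow, map_natCast, pow_succ, mul_assoc]

theorem iterate_verschiebung_mul_iterate_verschiebung (x y : WittVector p R) (m c : ℕ) :
    verschiebung^[m + c] x * verschiebung^[m] y =
      verschiebung^[m + c] (x * (frobenius^[c] y * (p : WittVector p R) ^ m)) := by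
  rw [iterate_verschiebung_mul_left, add_comm m c, iterate_add_apply WittVector.frobenius,
    iterate_frobenius_iterate_verschiebung, iterate_map_mul WittVector.frobenius,
    iterate_map_pow WittVector.frobenius, ← RingHom.coe_pow, map_natCast]

/-- The Witt vector `V^n (η · [s])` over `S`, with the coefficient `η` taken from `W(R)` along
`f : R →+* S`. The basic Witt differential `bwitt p ι P η x` is the case `S = R[P]`, `n = u(x)`,
`s = T^(p^u(x) x)`. -/
noncomputable def basicWitt (f : R →+* S) (n : ℕ) (η : WittVector p R) (s : S) :
    WittVector p S :=
  verschiebung^[n] (WittVector.map f η * teichmuller p s)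

theorem basicWitt_mul_basicWitt (f : R →+* S) (m c : ℕ) (η₁ η₂ : WittVector p R) (s t : S) :
    basicWitt f (m + c) η₁ s * basicWitt f m η₂ t =
      basicWitt f (m + c) (η₁ * (frobenius^[c] η₂ * (p : WittVector p R) ^ m))
        (s * t ^ p ^ c) := by
  simp only [basicWitt, iterate_verschiebung_mul_iterate_verschiebung, iterate_map_mul,
    iterate_frobenius_teichmuller, wittMap_iterate_frobenius, map_mul, map_pow, map_natCast]
  congr 1
  ring

theorem basicWitt_add_pow (f : R →+* S) (n d : ℕ) (η : WittVector p R) (s : S) :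
    basicWitt f (n + d) η (s ^ p ^ d) = basicWitt f n (verschiebung^[d] η) s := by
  rw [basicWitt, basicWitt, iterate_add_apply, ← iterate_frobenius_teichmuller,
    ← iterate_verschiebung_mul_left, wittMap_iterate_verschiebung]

end TeichmullerVerschiebung

section Weights

variable {p : ℕ} {G H : Type*} [AddCommGroup G] [AddCommGroup H] {ι : G →+ H}
  {P : AddSubmonoid G} {x y : H}

theorem IsPLocalization.injective (hloc : IsPLocalization p ι) (hG : IsSMulRegular G p) :
    Function.Injective ι := by
  rw [injective_iff_map_eq_zero]
  intro g hg
  obtain ⟨n, hn⟩ := (hloc.ker_eq g).1 hg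
  exact (hG.pow n).right_eq_zero_of_smul hn

theorem pow_uVal_nsmul_mem (hx : x ∈ pDiv p ι P) : p ^ uVal p ι P x • x ∈ P.map ι :=
  Nat.sInf_mem hx

theorem pow_nsmul_mem_of_uVal_le (hx : x ∈ pDiv p ι P) {n : ℕ} (hn : uVal p ι P x ≤ n) :
    p ^ n • x ∈ P.map ι := by
  rw [← Nat.sub_add_cancel hn, pow_add, mul_nsmul']
  exact nsmul_mem (pow_uVal_nsmul_mem hx) _

theorem pow_max_uVal_nsmul_add_mem (hx : x ∈ pDiv p ι P) (hy : y ∈ pDiv p ι P) :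
    p ^ max (uVal p ι P x) (uVal p ι P y) • (x + y) ∈ P.map ι := by
  rw [nsmul_add]
  exact add_mem (pow_nsmul_mem_of_uVal_le hx (le_max_left _ _))
    (pow_nsmul_mem_of_uVal_le hy (le_max_right _ _))

theorem add_mem_pDiv (hx : x ∈ pDiv p ι P) (hy : y ∈ pDiv p ι P) : x + y ∈ pDiv p ι P :=
  ⟨_, pow_max_uVal_nsmul_add_mem hx hy⟩

theorem uVal_add_le_max (hx : x ∈ pDiv p ι P) (hy : y ∈ pDiv p ι P) :
    uVal p ι P (x + y) ≤ max (uVal p ι P x) (uVal p ι P y) :=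
  Nat.sInf_le (pow_max_uVal_nsmul_add_mem hx hy)

theorem map_pLift (hx : x ∈ pDiv p ι P) : ι (pLift p ι P x) = p ^ uVal p ι P x • x := by
  have h : p ^ uVal p ι P x • x ∈ ι '' (P : Set G) := pow_uVal_nsmul_mem hx
  rw [pLift, dif_pos h]
  exact h.choose_spec.2

theorem map_pow_nsmul_pLift (hx : x ∈ pDiv p ι P) {n d : ℕ} (hn : n = uVal p ι P x + d) :
    ι (p ^ d • pLift p ι P x : P) = p ^ n • x := by
  rw [AddSubmonoidClass.coe_nsmul, map_nsmul, map_pLift hx, hn, pow_add, mul_nsmul]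

theorem pLift_add_pow_nsmul_pLift (hι : Set.InjOn ι P) (hx : x ∈ pDiv p ι P)
    (hy : y ∈ pDiv p ι P) {c d : ℕ} (hc : uVal p ι P x = uVal p ι P y + c)
    (hd : uVal p ι P x = uVal p ι P (x + y) + d) :
    pLift p ι P x + p ^ c • pLift p ι P y = p ^ d • pLift p ι P (x + y) := by
  apply Subtype.ext
  apply hι (SetLike.coe_mem _) (SetLike.coe_mem _)
  rw [map_pow_nsmul_pLift (add_mem_pDiv hx hy) hd, AddSubmonoid.coe_add, map_add, map_pLift hx,
    map_pow_nsmul_pLift hy hc, nsmul_add]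

end Weights

section Product

open WittVector

variable {p : ℕ} [Fact p.Prime] {R : Type*} [CommRing R] {G H : Type*} [AddCommGroup G]
  [AddCommGroup H] {ι : G →+ H} {P : AddSubmonoid G} {x₁ x₂ : H}

theorem bwitt_eq_basicWitt (η : WittVector p R) (x : H) :
    bwitt p ι P η x = basicWitt (algebraMap R (AddMonoidAlgebra R P)) (uVal p ι P x) η
      (AddMonoidAlgebra.single (pLift p ι P x) 1) :=
  rfl

theorem bwitt_mul_bwitt_eq (hι : Set.InjOn ι P) (h₁ : x₁ ∈ pDiv p ι P) (h₂ : x₂ ∈ pDiv p ι P)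
    {c d : ℕ} (hc : uVal p ι P x₁ = uVal p ι P x₂ + c)
    (hd : uVal p ι P x₁ = uVal p ι P (x₁ + x₂) + d) (η₁ η₂ : WittVector p R) :
    bwitt p ι P η₁ x₁ * bwitt p ι P η₂ x₂ =
      bwitt p ι P
        (verschiebung^[d] (η₁ * (frobenius^[c] η₂ * (p : WittVector p R) ^ uVal p ι P x₂)))
        (x₁ + x₂) := by
  have monomial_eq : AddMonoidAlgebra.single (pLift p ι P x₁) (1 : R) *
      AddMonoidAlgebra.single (pLift p ι P x₂) 1 ^ p ^ c =
        AddMonoidAlgebra.single (pLift p ι P (x₁ + x₂)) 1 ^ p ^ d := by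
    simp only [AddMonoidAlgebra.single_pow, AddMonoidAlgebra.single_mul_single, one_pow, mul_one,
      pLift_add_pow_nsmul_pLift hι h₁ h₂ hc hd]
  simp only [bwitt_eq_basicWitt]
  rw [← basicWitt_add_pow, ← hd, ← monomial_eq, hc, basicWitt_mul_basicWitt]

theorem exists_bwitt_mul_bwitt_of_uVal_le (hι : Set.InjOn ι P) (h₁ : x₁ ∈ pDiv p ι P)
    (h₂ : x₂ ∈ pDiv p ι P) (hle : uVal p ι P x₂ ≤ uVal p ι P x₁) (η₁ η₂ : WittVector p R) :
    ∃ η : WittVector p R,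
      bwitt p ι P η₁ x₁ * bwitt p ι P η₂ x₂ = bwitt p ι P η (x₁ + x₂) := by
  have hadd : uVal p ι P (x₁ + x₂) ≤ uVal p ι P x₁ :=
    (uVal_add_le_max h₁ h₂).trans_eq (max_eq_left hle)
  obtain ⟨c, hc⟩ := Nat.exists_eq_add_of_le hle
  obtain ⟨d, hd⟩ := Nat.exists_eq_add_of_le hadd
  exact ⟨_, bwitt_mul_bwitt_eq hι h₁ h₂ hc hd η₁ η₂⟩

theorem bwitt_mul_bwitt_general (hι : Set.InjOn ι P) (h₁ : x₁ ∈ pDiv p ι P)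
    (h₂ : x₂ ∈ pDiv p ι P) (η₁ η₂ : WittVector p R) :
    x₁ + x₂ ∈ pDiv p ι P ∧
      ∃ η : WittVector p R,
        bwitt p ι P η₁ x₁ * bwitt p ι P η₂ x₂ = bwitt p ι P η (x₁ + x₂) := by
  refine ⟨add_mem_pDiv h₁ h₂, ?_⟩
  rcases le_total (uVal p ι P x₂) (uVal p ι P x₁) with hle | hle
  · exact exists_bwitt_mul_bwitt_of_uVal_le hι h₁ h₂ hle η₁ η₂
  · rw [mul_comm, add_comm]
    exact exists_bwitt_mul_bwitt_of_uVal_le hι h₂ h₁ hle η₂ η₁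

end Product

/-- Let `p` be a prime, `R` a `ℤ_(p)`-algebra, and `P` an fs
monoid with `P^gp` torsion free.  For `x₁, x₂ ∈ P[1/p]` and arbitrary coefficients
`ξᵢ = V^{u(xᵢ)} ηᵢ ∈ V^{u(xᵢ)} W(R)`, the product of the two `P`-basic Witt
differentials `b(ξ₁, x₁) · b(ξ₂, x₂)` is again a `P`-basic Witt differential of
degree `0`, of weight `x₁ + x₂`. -/
theorem bwitt_mul_bwitt
    (p : ℕ) [Fact p.Prime] (R : Type*) [CommRing R]
    (hR : ∀ q : ℕ, q.Prime → q ≠ p → IsUnit (q : R))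
    {G H : Type*} [AddCommGroup G] [AddCommGroup H]
    (hTF : ∀ (g : G) (n : ℕ), 0 < n → n • g = 0 → g = 0)
    (ι : G →+ H) (hloc : IsPLocalization p ι)
    (P : AddSubmonoid G)
    (hGen : AddSubgroup.closure (P : Set G) = ⊤)
    (hFG : AddMonoid.FG ↥P)
    (hSat : ∀ g : G, ∀ n : ℕ, 0 < n → n • g ∈ P → g ∈ P) :
    ∀ x₁ ∈ pDiv p ι P, ∀ x₂ ∈ pDiv p ι P, ∀ η₁ η₂ : WittVector p R,
      x₁ + x₂ ∈ pDiv p ι P ∧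
      ∃ η : WittVector p R,
        bwitt p ι P (R := R) η₁ x₁ * bwitt p ι P η₂ x₂ =
          bwitt p ι P η (x₁ + x₂) := by
  have hG : IsSMulRegular G p := .of_right_eq_zero_of_smul fun g =>
    hTF g p (Fact.out : p.Prime).pos
  exact fun x₁ h₁ x₂ h₂ η₁ η₂ =>
    bwitt_mul_bwitt_general (hloc.injective hG).injOn h₁ h₂ η₁ η₂
end

section
/- Let p be a prime and f: Q → P a p-quasi-saturated homomorphism of integral monoids such that P is p-saturated and P^gp/Q^gp has no p-torsion. Then for every n ∈ ℕ and every x ∈ P whose image in P^gp/Q^gp is divisible by p^n (i.e., lies in p^n·(P^gp/Q^gp)), there exist r ∈ P and q ∈ Q with x = p^n·r + f(q). -/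
/-!
Quasi-saturation is multiplicative in the exponent: if `y` and `z` are the correction terms for `m`
and then for `n`, the identity `q - (m * n) • z = (q - m • y) + m • (y - n • z)` exhibits
`q - (m * n) • z` as an element of `Q`. So `φ` is quasi-saturated for `p ^ n`, and
quasi-saturation for any exponent `m` turns `m • g + φ q ∈ P` into
`m • (g + φ y) + φ (q - m • y)` with `g + φ y ∈ P` and `q - m • y ∈ Q`.
-/

theorem mem_addSubgroup_closure_iff_exists_sub {G : Type*} [AddCommGroup G] {S : AddSubmonoid G}
    {g : G} : g ∈ AddSubgroup.closure (S : Set G) ↔ ∃ a ∈ S, ∃ b ∈ S, a - b = g := by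
  rw [← AddSubgroup.mem_toAddSubmonoid, AddSubgroup.closure_toAddSubmonoid,
    AddSubmonoid.closure_union, AddSubmonoid.closure_neg, AddSubmonoid.closure_eq,
    AddSubmonoid.mem_sup]
  refine exists_congr fun a ↦ and_congr_right fun _ ↦
    ⟨fun ⟨b, hb, h⟩ ↦ ⟨-b, hb, ?_⟩, fun ⟨b, hb, h⟩ ↦ ⟨-b, ?_, ?_⟩⟩
  · rw [sub_neg_eq_add, h]
  · rwa [AddSubmonoid.mem_neg, neg_neg]
  · rw [← sub_eq_add_neg, h]

section

variable {GQ GP : Type*} [AddCommGroup GQ] [AddCommGroup GP]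

/-- `m`-quasi-saturation of a homomorphism of integral monoids `Q → P` with group completion `φ`,
for an arbitrary exponent `m`. Elements of the groups `GQ` and `GP` take the place of the
differences `q₁ - q₂` and `r₁ - r₂` in the usual definition; for monoids generating these groups
the two formulations agree by `isQuasiSaturated_iff_forall_sub`. -/
def IsQuasiSaturated (m : ℕ) (Q : AddSubmonoid GQ) (P : AddSubmonoid GP) (φ : GQ →+ GP) : Prop :=
  ∀ (g : GP) (q : GQ), m • g + φ q ∈ P → ∃ y : GQ, g + φ y ∈ P ∧ q - m • y ∈ Q

variable {m n : ℕ} {Q : AddSubmonoid GQ} {P : AddSubmonoid GP} {φ : GQ →+ GP}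

theorem isQuasiSaturated_iff_forall_sub (hQ : AddSubgroup.closure (Q : Set GQ) = ⊤)
    (hP : AddSubgroup.closure (P : Set GP) = ⊤) :
    IsQuasiSaturated m Q P φ ↔
      ∀ r₁ ∈ P, ∀ r₂ ∈ P, ∀ q₁ ∈ Q, ∀ q₂ ∈ Q, m • (r₁ - r₂) + φ (q₁ - q₂) ∈ P →
        ∃ y : GQ, (r₁ - r₂) + φ y ∈ P ∧ (q₁ - q₂) - m • y ∈ Q := by
  refine ⟨fun h r₁ _ r₂ _ q₁ _ q₂ _ ↦ h (r₁ - r₂) (q₁ - q₂), fun h g q ↦ ?_⟩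
  obtain ⟨r₁, hr₁, r₂, hr₂, rfl⟩ :=
    mem_addSubgroup_closure_iff_exists_sub.mp (hP ▸ AddSubgroup.mem_top g)
  obtain ⟨q₁, hq₁, q₂, hq₂, rfl⟩ :=
    mem_addSubgroup_closure_iff_exists_sub.mp (hQ ▸ AddSubgroup.mem_top q)
  exact h r₁ hr₁ r₂ hr₂ q₁ hq₁ q₂ hq₂

namespace IsQuasiSaturated

theorem one : IsQuasiSaturated 1 Q P φ :=
  fun g q h ↦ ⟨q, by simpa using h, by simp⟩

theorem mul (hm : IsQuasiSaturated m Q P φ) (hn : IsQuasiSaturated n Q P φ) :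
    IsQuasiSaturated (m * n) Q P φ := by
  intro g q h
  rw [mul_smul] at h
  obtain ⟨y, hy, hqy⟩ := hm (n • g) q h
  obtain ⟨z, hz, hyz⟩ := hn g y hy
  have hqz : q - (m * n) • z = (q - m • y) + m • (y - n • z) := by
    rw [smul_sub, mul_smul, sub_add_sub_cancel]
  exact ⟨z, hz, hqz ▸ Q.add_mem hqy (Q.nsmul_mem hyz m)⟩

theorem pow (h : IsQuasiSaturated m Q P φ) (n : ℕ) : IsQuasiSaturated (m ^ n) Q P φ := by
  induction n with
  | zero => simpa only [pow_zero] using one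
  | succ n ih => simpa only [pow_succ] using ih.mul h

theorem exists_eq_nsmul_add_map (h : IsQuasiSaturated m Q P φ) {g : GP} {q : GQ}
    (hx : m • g + φ q ∈ P) : ∃ r ∈ P, ∃ s ∈ Q, m • g + φ q = m • r + φ s := by
  obtain ⟨y, hy, hqy⟩ := h g q hx
  refine ⟨g + φ y, hy, q - m • y, hqy, ?_⟩
  rw [smul_add, map_sub, map_nsmul, add_assoc, add_sub_cancel]

end IsQuasiSaturated

end

theorem exists_pPow_smul_add_of_quasiSaturated_general
    {p : ℕ} {GQ GP : Type*} [AddCommGroup GQ] [AddCommGroup GP]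
    {Q : AddSubmonoid GQ} {P : AddSubmonoid GP} {φ : GQ →+ GP} (h : IsQuasiSaturated p Q P φ) :
    ∀ n : ℕ, ∀ x ∈ P, (∃ (g : GP) (q : GQ), x = p ^ n • g + φ q) →
      ∃ r ∈ P, ∃ q ∈ Q, x = p ^ n • r + φ q := by
  rintro n _ hx ⟨g, q, rfl⟩
  exact (h.pow n).exists_eq_nsmul_add_map hx

/-- Let `p` be a prime and `f : Q → P` a `p`-quasi-saturated
homomorphism of integral monoids such that `P` is `p`-saturated and
`P^gp/Q^gp` has no `p`-torsion.  (Monoids are modelled as additive submonoids of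
the abelian groups `GQ = Q^gp`, `GP = P^gp` they generate, `f` being the
restriction of `φ = f^gp : GQ →+ GP`.)  Then for every `n ∈ ℕ` and every `x ∈ P`
whose image in `P^gp/Q^gp` is divisible by `p^n`, there exist `r ∈ P` and `q ∈ Q`
with `x = p^n • r + φ q`. -/
theorem exists_pPow_smul_add_of_quasiSaturated
    (p : ℕ) (hp : p.Prime)
    {GQ GP : Type*} [AddCommGroup GQ] [AddCommGroup GP]
    (Q : AddSubmonoid GQ) (P : AddSubmonoid GP)
    (φ : GQ →+ GP) (hmap : ∀ x ∈ Q, φ x ∈ P)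
    (hQGen : AddSubgroup.closure (Q : Set GQ) = ⊤)
    (hPGen : AddSubgroup.closure (P : Set GP) = ⊤)
    (hpqs : ∀ r₁ ∈ P, ∀ r₂ ∈ P, ∀ q₁ ∈ Q, ∀ q₂ ∈ Q,
        p • (r₁ - r₂) + φ (q₁ - q₂) ∈ P →
        ∃ x : GQ, (r₁ - r₂) + φ x ∈ P ∧ (q₁ - q₂) - p • x ∈ Q)
    (hPsat : ∀ g : GP, p • g ∈ P → g ∈ P)
    (hNoPTor : ∀ g : GP, p • g ∈ AddMonoidHom.range φ → g ∈ AddMonoidHom.range φ) :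
    ∀ n : ℕ, ∀ x ∈ P, (∃ (g : GP) (q : GQ), x = p ^ n • g + φ q) →
      ∃ r ∈ P, ∃ q ∈ Q, x = p ^ n • r + φ q :=
  exists_pPow_smul_add_of_quasiSaturated_general
    ((isQuasiSaturated_iff_forall_sub hQGen hPGen).mpr hpqs)
end

section
/- Let p be a prime and f: Q → P an injective homomorphism of integral monoids such that Q is saturated, Q^gp and P^gp are torsion free, and P^gp/Q^gp has no p-torsion. Then for every q ∈ Q[1/p] and r ∈ P, the element f(q) + r of P^gp ⊗_ℤ ℤ[1/p] (where f also denotes the induced map Q^gp ⊗ ℤ[1/p] → P^gp ⊗ ℤ[1/p]) lies in P[1/p] and u_P(f(q) + r) = u_Q(q). In particular u_P(f(q)) = u_Q(q) for all q ∈ Q[1/p]. -/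
/-!
When `Q` is saturated, membership of `p ^ n • q` in `Q` can be tested in the group `Q^gp`, for every
`q ∈ Q[1/p]`: an element of `Q^gp` with a `p`-power multiple in `Q` is itself in `Q`. In the same
way, since `P^gp / Q^gp` has no `p`-torsion, an element of `Q^gp[1/p]` whose image lies in `P^gp`
comes from `Q^gp`. So if `p ^ n • (f q + r)` is in `P`, then `p ^ n • f q` is in `P^gp`, hence
`p ^ n • q` is in `Q^gp` and therefore in `Q`; the converse is clear.
-/

/-- `S` is closed under division by `p`. A saturated monoid has this property for every `p > 0`,
and the image of a homomorphism of abelian groups has it when the cokernel has no `p`-torsion. -/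
def IsPSaturated (p : ℕ) {M : Type*} [AddMonoid M] (S : AddSubmonoid M) : Prop :=
  ∀ x : M, p • x ∈ S → x ∈ S

theorem IsPSaturated.mem_of_pow_nsmul_mem {p : ℕ} {M : Type*} [AddMonoid M] {S : AddSubmonoid M}
    (hS : IsPSaturated p S) {x : M} (n : ℕ) (hx : p ^ n • x ∈ S) : x ∈ S := by
  induction n with
  | zero => simpa using hx
  | succ n ih => exact ih (hS _ (by rwa [← mul_nsmul', ← pow_succ']))

theorem injective_of_injOn_of_closure_eq_top {G H : Type*} [AddCommGroup G] [AddGroup H]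
    {S : AddSubmonoid G} {φ : G →+ H} (hinj : Set.InjOn φ S)
    (hS : AddSubgroup.closure (S : Set G) = ⊤) : Function.Injective φ := by
  rw [injective_iff_map_eq_zero]
  intro x hx
  have hmem : x ∈ (AddSubgroup.closure (S : Set G)).toAddSubmonoid := by simp [hS]
  rw [AddSubgroup.closure_toAddSubmonoid, AddSubmonoid.closure_union, AddSubmonoid.closure_eq,
    AddSubmonoid.closure_neg, AddSubmonoid.closure_eq, AddSubmonoid.mem_sup] at hmem
  obtain ⟨a, ha, b, hb, rfl⟩ := hmem
  rw [map_add, add_eq_zero_iff_eq_neg, ← map_neg] at hx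
  rw [hinj ha hb hx, neg_add_cancel]

section Localization

variable {p : ℕ} {G H : Type*} [AddCommGroup G] [AddCommGroup H] {ι : G →+ H} {S : AddSubmonoid G}

theorem nsmul_mem_pDiv (n : ℕ) {x : H} (hx : x ∈ pDiv p ι S) : n • x ∈ pDiv p ι S := by
  obtain ⟨m, a, ha, h⟩ := hx
  exact ⟨m, n • a, S.nsmul_mem ha n, by rw [map_nsmul, h, smul_comm]⟩

namespace IsPLocalization

theorem pow_nsmul_injective (hι : IsPLocalization p ι) (n : ℕ) :
    Function.Injective fun x : H => p ^ n • x := by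
  simpa only [smul_iterate] using hι.smul_bij.injective.iterate n

theorem mem_pDiv_top (hι : IsPLocalization p ι) (x : H) : x ∈ pDiv p ι ⊤ := by
  obtain ⟨n, g, h⟩ := hι.exists_rep x
  exact ⟨n, g, AddSubmonoid.mem_top g, h.symm⟩

theorem map_mem_pDiv_iff (hι : IsPLocalization p ι) (hS : IsPSaturated p S) {g : G} :
    ι g ∈ pDiv p ι S ↔ g ∈ S := by
  refine ⟨?_, fun hg => ⟨0, g, hg, by simp⟩⟩
  rintro ⟨m, a, ha, h⟩
  obtain ⟨k, hk⟩ : ∃ k : ℕ, p ^ k • (p ^ m • g - a) = 0 := by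
    rw [← hι.ker_eq, map_sub, map_nsmul, h, sub_self]
  refine hS.mem_of_pow_nsmul_mem m (hS.mem_of_pow_nsmul_mem k ?_)
  rw [smul_sub, sub_eq_zero] at hk
  exact hk ▸ S.nsmul_mem ha _

theorem pow_nsmul_mem_image_iff_mem_range (hι : IsPLocalization p ι) (hS : IsPSaturated p S) {x : H}
    (hx : x ∈ pDiv p ι S) (n : ℕ) : p ^ n • x ∈ ι '' (S : Set G) ↔ p ^ n • x ∈ ι.range := by
  constructor
  · rintro ⟨g, -, h⟩
    exact ⟨g, h⟩
  · rintro ⟨g, h⟩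
    exact ⟨g, (hι.map_mem_pDiv_iff hS).1 (h ▸ nsmul_mem_pDiv _ hx), h⟩

end IsPLocalization

end Localization

section Map

variable {p : ℕ} {GQ GP HQ HP : Type*} [AddCommGroup GQ] [AddCommGroup GP] [AddCommGroup HQ]
  [AddCommGroup HP] {φ : GQ →+ GP} {ιQ : GQ →+ HQ} {ιP : GP →+ HP} {ψ : HQ →+ HP}
  {Q : AddSubmonoid GQ} {P : AddSubmonoid GP}

theorem pow_nsmul_map_add_mem_image (hψ : ∀ g, ψ (ιQ g) = ιP (φ g)) (hmap : ∀ x ∈ Q, φ x ∈ P)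
    {q : HQ} {r : GP} (hr : r ∈ P) {n : ℕ} (hq : p ^ n • q ∈ ιQ '' (Q : Set GQ)) :
    p ^ n • (ψ q + ιP r) ∈ ιP '' (P : Set GP) := by
  obtain ⟨a, ha, h⟩ := hq
  refine ⟨φ a + p ^ n • r, P.add_mem (hmap a ha) (P.nsmul_mem hr _), ?_⟩
  rw [map_add, ← hψ, h, map_nsmul, map_nsmul, smul_add]

theorem map_add_mem_pDiv (hψ : ∀ g, ψ (ιQ g) = ιP (φ g)) (hmap : ∀ x ∈ Q, φ x ∈ P)
    {q : HQ} (hq : q ∈ pDiv p ιQ Q) {r : GP} (hr : r ∈ P) : ψ q + ιP r ∈ pDiv p ιP P :=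
  hq.imp fun _ hn => pow_nsmul_map_add_mem_image hψ hmap hr hn

namespace IsPLocalization

theorem map_injective (hιQ : IsPLocalization p ιQ) (hιP : IsPLocalization p ιP)
    (hψ : ∀ g, ψ (ιQ g) = ιP (φ g)) (hφ : Function.Injective φ) : Function.Injective ψ := by
  rw [injective_iff_map_eq_zero]
  intro x hx
  obtain ⟨m, a, ha⟩ := hιQ.exists_rep x
  obtain ⟨k, hk⟩ : ∃ k : ℕ, p ^ k • φ a = 0 := by
    rw [← hιP.ker_eq, ← hψ, ← ha, map_nsmul, hx, smul_zero]
  have ha_zero : ιQ a = 0 := (hιQ.ker_eq a).2 ⟨k, hφ (by rw [map_nsmul, hk, map_zero])⟩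
  exact hιQ.pow_nsmul_injective m (by simp only [ha, ha_zero, smul_zero])

theorem map_mem_range_iff (hιQ : IsPLocalization p ιQ) (hιP : IsPLocalization p ιP)
    (hψ : ∀ g, ψ (ιQ g) = ιP (φ g)) (hφ : Function.Injective φ)
    (hrange : IsPSaturated p (AddMonoidHom.mrange φ)) {x : HQ} :
    ψ x ∈ ιP.range ↔ x ∈ ιQ.range := by
  constructor
  · rintro ⟨g, hg⟩
    have hx : ψ x ∈ pDiv p ιP (AddMonoidHom.mrange φ) := by
      simpa using map_add_mem_pDiv hψ (fun a _ => AddMonoidHom.mem_mrange.2 ⟨a, rfl⟩)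
        (hιQ.mem_pDiv_top x) (zero_mem _)
    obtain ⟨b, rfl⟩ := (hιP.map_mem_pDiv_iff hrange).1 (hg ▸ hx)
    exact ⟨b, hιQ.map_injective hιP hψ hφ ((hψ b).trans hg)⟩
  · rintro ⟨b, rfl⟩
    exact ⟨φ b, (hψ b).symm⟩

end IsPLocalization

theorem uVal_map_add_general (hmap : ∀ x ∈ Q, φ x ∈ P) (hφ : Function.Injective φ)
    (hQ : IsPSaturated p Q) (hrange : IsPSaturated p (AddMonoidHom.mrange φ))
    (hιQ : IsPLocalization p ιQ) (hιP : IsPLocalization p ιP) (hψ : ∀ g, ψ (ιQ g) = ιP (φ g))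
    {q : HQ} (hq : q ∈ pDiv p ιQ Q) {r : GP} (hr : r ∈ P) :
    ψ q + ιP r ∈ pDiv p ιP P ∧ uVal p ιP P (ψ q + ιP r) = uVal p ιQ Q q := by
  refine ⟨map_add_mem_pDiv hψ hmap hq hr, congrArg sInf (Set.ext fun n => ?_)⟩
  refine ⟨fun hn => ?_, pow_nsmul_map_add_mem_image hψ hmap hr⟩
  have hsum : p ^ n • ψ q + ιP (p ^ n • r) ∈ ιP.range := by
    rw [map_nsmul, ← smul_add]
    exact Set.image_subset_range _ _ hn
  have hψq : ψ (p ^ n • q) ∈ ιP.range := by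
    rwa [map_nsmul, ← ιP.range.add_mem_cancel_right ⟨p ^ n • r, rfl⟩]
  exact (hιQ.pow_nsmul_mem_image_iff_mem_range hQ hq n).2
    ((hιQ.map_mem_range_iff hιP hψ hφ hrange).1 hψq)

end Map

/-- Let `p` be a prime and `f : Q → P` an injective
homomorphism of integral monoids such that `Q` is saturated, `Q^gp` and `P^gp`
are torsion free, and `P^gp/Q^gp` has no `p`-torsion.  (Monoids are modelled as
additive submonoids of the abelian groups `GQ = Q^gp`, `GP = P^gp` they generate,
`f` being the restriction of `φ = f^gp : GQ →+ GP`; `ιQ : GQ →+ HQ` and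
`ιP : GP →+ HP` realize the localizations `Q^gp ⊗ ℤ[1/p]` and `P^gp ⊗ ℤ[1/p]`,
and `ψ : HQ →+ HP` is the induced map.)  Then for every `q ∈ Q[1/p]` and `r ∈ P`
the element `f(q) + r` lies in `P[1/p]` with `u_P(f(q) + r) = u_Q(q)`.  In
particular `u_P(f(q)) = u_Q(q)` for all `q ∈ Q[1/p]`. -/
theorem uVal_map_add (p : ℕ) (hp : p.Prime)
    {GQ GP HQ HP : Type*} [AddCommGroup GQ] [AddCommGroup GP]
    [AddCommGroup HQ] [AddCommGroup HP]
    (Q : AddSubmonoid GQ) (P : AddSubmonoid GP)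
    (φ : GQ →+ GP) (hmap : ∀ x ∈ Q, φ x ∈ P)
    (hinj : ∀ a ∈ Q, ∀ b ∈ Q, φ a = φ b → a = b)
    (hQGen : AddSubgroup.closure (Q : Set GQ) = ⊤)
    (hPGen : AddSubgroup.closure (P : Set GP) = ⊤)
    (hQsat : ∀ g : GQ, ∀ n : ℕ, 0 < n → n • g ∈ Q → g ∈ Q)
    (hTFQ : ∀ (g : GQ) (n : ℕ), 0 < n → n • g = 0 → g = 0)
    (hTFP : ∀ (g : GP) (n : ℕ), 0 < n → n • g = 0 → g = 0)
    (hNoPTor : ∀ g : GP, p • g ∈ AddMonoidHom.range φ → g ∈ AddMonoidHom.range φ)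
    (ιQ : GQ →+ HQ) (hlocQ : IsPLocalization p ιQ)
    (ιP : GP →+ HP) (hlocP : IsPLocalization p ιP)
    (ψ : HQ →+ HP) (hψ : ∀ g : GQ, ψ (ιQ g) = ιP (φ g)) :
    (∀ q ∈ pDiv p ιQ Q, ∀ r ∈ P,
        ψ q + ιP r ∈ pDiv p ιP P ∧
        uVal p ιP P (ψ q + ιP r) = uVal p ιQ Q q) ∧
    (∀ q ∈ pDiv p ιQ Q,
        ψ q ∈ pDiv p ιP P ∧ uVal p ιP P (ψ q) = uVal p ιQ Q q) := by
  have hφ := injective_of_injOn_of_closure_eq_top (fun a ha b hb => hinj a ha b hb) hQGen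
  have key := fun q hq r hr => uVal_map_add_general (q := q) (r := r) hmap hφ
    (fun g => hQsat g p hp.pos) hNoPTor hlocQ hlocP hψ hq hr
  exact ⟨key, fun q hq => by simpa using key q hq 0 P.zero_mem⟩
end
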